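/- arXiv:2108.02758 — 5 statements merged into one kernel-verified Lean document; each statement's English description precedes it below -/
import Mathlib

section
/- (Forney formula for generalized Reed–Solomon codes.) If e_j ≠ 0, then e_j = φ^e(α_j) / (f^e)'(α_j), where (f^e)' denotes the formal derivative of the error locator polynomial. -/
open Polynomial
open scoped Classical

noncomputable section

variable {F : Type*} [Field F]

/-- The coefficient of `x^a` in the Laurent expansion of the rational function `h`
in `1/x` (i.e. the expansion at infinity): substituting `x = 1/t`, the rational
function `h(1/t)` equals `t^(deg denom - deg num) * reverse(num)(t)/reverse(denom)(t)`,
and we take the coefficient of `t^(-a)` in its Laurent expansion at `t = 0`. -/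
def coeffAtInf (h : RatFunc F) (a : ℤ) : F :=
  let v : RatFunc F :=
    (RatFunc.X : RatFunc F) ^ ((h.denom.natDegree : ℤ) - (h.num.natDegree : ℤ)) *
      (algebraMap (Polynomial F) (RatFunc F) h.num.reverse /
        algebraMap (Polynomial F) (RatFunc F) h.denom.reverse)
  ((v : LaurentSeries F)).coeff (-a)

variable (F) in
/-- The error locator polynomial `f^e`. -/
def errLoc {n : ℕ} (α : Fin n → F) (e : Fin n → F) : Polynomial F :=
  ∏ j ∈ Finset.univ.filter (fun j => e j ≠ 0), (X - C (α j))

variable (F) in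
/-- The error evaluator polynomial `φ^e`. -/
def errEval {n : ℕ} (α : Fin n → F) (e : Fin n → F) : Polynomial F :=
  ∑ j ∈ Finset.univ.filter (fun j => e j ≠ 0),
    C (e j) * ∏ k ∈ (Finset.univ.filter (fun k => e k ≠ 0)).erase j, (X - C (α k))

variable (F) in
/-- The syndrome `S = φ^e/f^e = ∑_j e_j/(x - α_j)` as a rational function. -/
def synd {n : ℕ} (α : Fin n → F) (e : Fin n → F) : RatFunc F :=
  algebraMap (Polynomial F) (RatFunc F) (errEval F α e) /
    algebraMap (Polynomial F) (RatFunc F) (errLoc F α e)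

end

/-!
With `s` the support of `e`, the error locator is the nodal polynomial `∏ k ∈ s, (X - α k)`, and the
products in the error evaluator are the nodal polynomials of the sets `s \ {i}`. At the node `α j`
only the term `i = j` of a combination of these survives. Since the derivative of the error locator
is the combination with all coefficients `1`, evaluation gives `φ^e(α_j) = e_j (f^e)'(α_j)`.
-/

theorem eval_sum_C_mul_nodal_erase {R ι : Type*} [CommRing R] [DecidableEq ι]
    {s : Finset ι} (v c : ι → R) {j : ι} (hj : j ∈ s) :
    (∑ i ∈ s, C (c i) * Lagrange.nodal (s.erase i) v).eval (v j) =
      c j * (derivative (Lagrange.nodal s v)).eval (v j) := by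
  have other_terms_vanish : ∀ i ∈ s, i ≠ j →
      (C (c i) * Lagrange.nodal (s.erase i) v).eval (v j) = 0 := by
    intro i _ hij
    have hj_erase : j ∈ s.erase i := Finset.mem_erase.2 ⟨hij.symm, hj⟩
    rw [eval_C_mul, Lagrange.eval_nodal_at_node hj_erase, mul_zero]
  rw [eval_finsetSum, Finset.sum_eq_single_of_mem j hj other_terms_vanish, eval_C_mul,
    Lagrange.eval_nodal_derivative_eval_node_eq hj]

theorem eval_derivative_nodal_ne_zero {R ι : Type*} [CommRing R] [IsDomain R]
    {s : Finset ι} {v : ι → R} (hv : Set.InjOn v s) {j : ι} (hj : j ∈ s) :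
    (derivative (Lagrange.nodal s v)).eval (v j) ≠ 0 := by
  classical
  rw [Lagrange.eval_nodal_derivative_eval_node_eq hj]
  refine Lagrange.eval_nodal_not_at_node fun k hk => ?_
  obtain ⟨hkj, hks⟩ := Finset.mem_erase.1 hk
  exact hv.ne hj hks hkj.symm

theorem forney_formula_RS_general {K ι : Type*} [Field K] [DecidableEq ι]
    {s : Finset ι} {v : ι → K} (hv : Set.InjOn v s) (c : ι → K) {j : ι} (hj : j ∈ s) :
    c j = (∑ i ∈ s, C (c i) * Lagrange.nodal (s.erase i) v).eval (v j) /
      (derivative (Lagrange.nodal s v)).eval (v j) :=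
  eq_div_of_mul_eq (eval_derivative_nodal_ne_zero hv hj) (eval_sum_C_mul_nodal_erase v c hj).symm

/-- **Forney formula for generalized Reed-Solomon codes.**  If `e_j ≠ 0`, then
`e_j = φ^e(α_j) / (f^e)'(α_j)`. -/
theorem forney_formula_RS {F : Type*} [Field F] [Fintype F] {n : ℕ}
    (α : Fin n → F) (hα : Function.Injective α) (e : Fin n → F)
    (j : Fin n) (hj : e j ≠ 0) :
    e j = (errEval F α e).eval (α j) / (Polynomial.derivative (errLoc F α e)).eval (α j) :=
  forney_formula_RS_general hα.injOn e (Finset.mem_filter.2 ⟨Finset.mem_univ j, hj⟩)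
end

section
/- Let f ∈ F_q[x]. If the Laurent expansion in 1/x of fS has zero coefficients in all degrees −1, −2, …, −t, then f is a polynomial multiple of the error locator f^e. In particular, if fS is a polynomial then f^e divides f. -/
open Polynomial
open scoped Classical

/-!
Substituting `T = x⁻¹` embeds `F(x)` into the Laurent series in `T`, the order of the image of `h`
being `-deg h`. Divide with remainder to write `p / q = P + r / q` with `deg r < deg q`. Since the
polynomial `P` has no terms in negative degrees, `p / q` and `r / q` have the same expansion there;
and if `r ≠ 0`, then `r / q` has a nonzero coefficient in degree `deg r - deg q`, which lies between
`-deg q` and `-1`. Hence `q ∣ p` once these coefficients of `p / q` vanish. For `fS = f φ^e / f^e`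
this gives `f^e ∣ f φ^e`, and `f^e` is coprime to `φ^e`.
-/

section EvalInv

variable {R : Type*} [CommSemiring R]

variable (R) in
/-- The substitution of `T⁻¹` for `X`, from polynomials to Laurent series in `T`: it expands a
polynomial at infinity. -/
noncomputable def evalInv : R[X] →+* LaurentSeries R :=
  eval₂RingHom HahnSeries.C (HahnSeries.single (-1) 1)

lemma evalInv_monomial (m : ℕ) (c : R) :
    evalInv R (monomial m c) = HahnSeries.single (-(m : ℤ)) c := by
  simp [evalInv, HahnSeries.C_apply, HahnSeries.single_pow, HahnSeries.single_mul_single]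

lemma coeff_evalInv_neg (p : R[X]) (k : ℕ) : (evalInv R p).coeff (-(k : ℤ)) = p.coeff k := by
  induction p using Polynomial.induction_on' with
  | add p q hp hq => rw [map_add, HahnSeries.coeff_add, hp, hq, Polynomial.coeff_add]
  | monomial m c =>
    simp [evalInv_monomial, HahnSeries.coeff_single, coeff_monomial, eq_comm]

lemma coeff_evalInv_of_pos (p : R[X]) {k : ℤ} (hk : 0 < k) : (evalInv R p).coeff k = 0 := by
  induction p using Polynomial.induction_on' with
  | add p q hp hq => rw [map_add, HahnSeries.coeff_add, hp, hq, add_zero]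
  | monomial m c => rw [evalInv_monomial, HahnSeries.coeff_single_of_ne (by omega)]

lemma evalInv_injective : Function.Injective (evalInv R) := by
  intro p q h
  ext k
  rw [← coeff_evalInv_neg, h, coeff_evalInv_neg]

lemma order_evalInv (p : R[X]) : (evalInv R p).order = -(p.natDegree : ℤ) := by
  obtain rfl | hp := eq_or_ne p 0
  · simp
  refine le_antisymm (HahnSeries.order_le_of_coeff_ne_zero ?_)
    ((HahnSeries.le_order_iff_forall ?_).mpr fun k hk => ?_)
  · rwa [coeff_evalInv_neg, coeff_natDegree, leadingCoeff_ne_zero]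
  · rwa [Ne, map_eq_zero_iff _ evalInv_injective]
  · obtain ⟨m, rfl⟩ : ∃ m : ℕ, k = -(m : ℤ) := ⟨k.natAbs, by omega⟩
    rw [coeff_evalInv_neg, coeff_eq_zero_of_natDegree_lt (by omega)]

lemma algebraMap_laurentSeries_eq_eval₂ (p : R[X]) :
    algebraMap R[X] (LaurentSeries R) p = p.eval₂ HahnSeries.C (HahnSeries.single 1 1) := by
  have h : algebraMap R[X] (LaurentSeries R) =
      eval₂RingHom HahnSeries.C (HahnSeries.single 1 1) := by
    ext <;> simp
  rw [h, coe_eval₂RingHom]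

lemma algebraMap_reverse_eq_single_mul_evalInv (p : R[X]) :
    algebraMap R[X] (LaurentSeries R) p.reverse =
      HahnSeries.single (p.natDegree : ℤ) 1 * evalInv R p := by
  let T : LaurentSeries R := HahnSeries.single 1 1
  let _ : Invertible (HahnSeries.single (-1) 1 : LaurentSeries R) :=
    ⟨T, by simp [T], by simp [T]⟩
  have h := eval₂_reverse_mul_pow HahnSeries.C (HahnSeries.single (-1) 1 : LaurentSeries R) p
  have hT : ⅟(HahnSeries.single (-1) 1 : LaurentSeries R) = T := rfl
  rw [hT, HahnSeries.single_pow] at h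
  rw [algebraMap_laurentSeries_eq_eval₂, evalInv, coe_eval₂RingHom, ← h, mul_left_comm,
    HahnSeries.single_mul_single]
  simp [T]

end EvalInv

section ExpansionAtInf

variable {F : Type*} [Field F]

variable (F) in
/-- The expansion of rational functions at infinity, as Laurent series in `T = X⁻¹`: the
coefficient of `X ^ a` is found in degree `-a`. -/
noncomputable def expansionAtInf : RatFunc F →+* LaurentSeries F :=
  RatFunc.liftRingHom (evalInv F)
    (nonZeroDivisors_le_comap_nonZeroDivisors_of_injective _ evalInv_injective)

lemma expansionAtInf_apply (h : RatFunc F) :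
    expansionAtInf F h = evalInv F h.num / evalInv F h.denom :=
  RatFunc.liftRingHom_apply _ _ _

lemma expansionAtInf_algebraMap (p : F[X]) :
    expansionAtInf F (algebraMap F[X] (RatFunc F) p) = evalInv F p := by
  simp [expansionAtInf_apply]

lemma order_expansionAtInf (h : RatFunc F) : (expansionAtInf F h).order = -h.intDegree := by
  obtain rfl | hh := eq_or_ne h 0
  · simp
  have hmul : expansionAtInf F h * evalInv F h.denom = evalInv F h.num := by
    rw [expansionAtInf_apply, div_mul_cancel₀]
    exact (map_ne_zero_iff _ evalInv_injective).mpr h.denom_ne_zero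
  have hne : expansionAtInf F h * evalInv F h.denom ≠ 0 := by
    rw [hmul]
    exact (map_ne_zero_iff _ evalInv_injective).mpr (RatFunc.num_ne_zero hh)
  have horder := congrArg HahnSeries.order hmul
  rw [HahnSeries.order_mul (left_ne_zero_of_mul hne) (right_ne_zero_of_mul hne), order_evalInv,
    order_evalInv] at horder
  rw [RatFunc.intDegree]
  omega

lemma coeffAtInf_eq_coeff_expansionAtInf (h : RatFunc F) (a : ℤ) :
    coeffAtInf h a = (expansionAtInf F h).coeff (-a) := by
  have hsingle :
      (HahnSeries.single ((h.denom.natDegree : ℤ) - h.num.natDegree) 1 : LaurentSeries F) *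
      (HahnSeries.single (h.num.natDegree : ℤ) 1 / HahnSeries.single (h.denom.natDegree : ℤ) 1) =
        1 := by
    rw [mul_div_assoc', HahnSeries.single_mul_single, sub_add_cancel, one_mul, div_self (by simp)]
  simp only [coeffAtInf, map_mul, map_div₀, map_zpow₀, RatFunc.coe_X, ← RatFunc.single_zpow,
    ← IsScalarTower.algebraMap_apply, algebraMap_reverse_eq_single_mul_evalInv]
  rw [mul_div_mul_comm, ← mul_assoc, hsingle, one_mul, expansionAtInf_apply]

lemma coeffAtInf_add (g h : RatFunc F) (a : ℤ) :
    coeffAtInf (g + h) a = coeffAtInf g a + coeffAtInf h a := by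
  simp only [coeffAtInf_eq_coeff_expansionAtInf, map_add, HahnSeries.coeff_add]

lemma coeffAtInf_algebraMap_of_neg (p : F[X]) {a : ℤ} (ha : a < 0) :
    coeffAtInf (algebraMap F[X] (RatFunc F) p) a = 0 := by
  rw [coeffAtInf_eq_coeff_expansionAtInf, expansionAtInf_algebraMap,
    coeff_evalInv_of_pos p (neg_pos.mpr ha)]

lemma coeffAtInf_intDegree_ne_zero {h : RatFunc F} (hh : h ≠ 0) :
    coeffAtInf h h.intDegree ≠ 0 := by
  rw [coeffAtInf_eq_coeff_expansionAtInf, ← order_expansionAtInf, Ne,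
    HahnSeries.coeff_order_eq_zero]
  exact (_root_.map_ne_zero _).mpr hh

lemma dvd_of_coeffAtInf_div_eq_zero {p q : F[X]} (hq : q ≠ 0)
    (h : ∀ a : ℤ, -(q.natDegree : ℤ) ≤ a → a ≤ -1 →
      coeffAtInf (algebraMap F[X] (RatFunc F) p / algebraMap F[X] (RatFunc F) q) a = 0) :
    q ∣ p := by
  by_contra hdvd
  have hr : p % q ≠ 0 := mt EuclideanDomain.mod_eq_zero.mp hdvd
  have hdeg : (p % q).natDegree < q.natDegree :=
    natDegree_lt_natDegree hr (degree_mod_lt p hq)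
  let ι := algebraMap F[X] (RatFunc F)
  have hιq : ι q ≠ 0 := RatFunc.algebraMap_ne_zero hq
  have hιr : ι (p % q) ≠ 0 := RatFunc.algebraMap_ne_zero hr
  have hdecomp : ι p / ι q = ι (p / q) + ι (p % q) / ι q := by
    rw [div_eq_iff hιq, add_mul, div_mul_cancel₀ _ hιq, ← map_mul, ← map_add, mul_comm,
      EuclideanDomain.div_add_mod]
  have hint : (ι (p % q) / ι q).intDegree = (p % q).natDegree - q.natDegree := by
    rw [RatFunc.intDegree_div hιr hιq, RatFunc.intDegree_polynomial, RatFunc.intDegree_polynomial]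
  have hcoeff : coeffAtInf (ι p / ι q) (ι (p % q) / ι q).intDegree =
      coeffAtInf (ι (p % q) / ι q) (ι (p % q) / ι q).intDegree := by
    rw [hdecomp, coeffAtInf_add, coeffAtInf_algebraMap_of_neg _ (by omega), zero_add]
  refine coeffAtInf_intDegree_ne_zero (div_ne_zero hιr hιq) ?_
  rw [← hcoeff]
  exact h _ (by omega) (by omega)

end ExpansionAtInf

section ErrorLocator

variable {F : Type*} [Field F] {n : ℕ}

lemma errLoc_ne_zero (α e : Fin n → F) : errLoc F α e ≠ 0 :=
  (monic_prod_X_sub_C α _).ne_zero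

lemma natDegree_errLoc (α e : Fin n → F) :
    (errLoc F α e).natDegree = (Finset.univ.filter fun j => e j ≠ 0).card := by
  rw [errLoc, natDegree_finsetProd_X_sub_C_eq_card]

lemma eval_errEval {α e : Fin n → F} {j : Fin n} (hj : e j ≠ 0) :
    (errEval F α e).eval (α j) =
      e j * ∏ k ∈ (Finset.univ.filter fun k => e k ≠ 0).erase j, (α j - α k) := by
  have hmem : j ∈ Finset.univ.filter fun k => e k ≠ 0 := by simpa using hj
  rw [errEval, eval_finsetSum, Finset.sum_eq_single_of_mem j hmem]
  · simp [eval_prod]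
  · intro i _ hij
    rw [eval_mul, eval_prod,
      Finset.prod_eq_zero (Finset.mem_erase.mpr ⟨hij.symm, hmem⟩) (by simp), mul_zero]

lemma isCoprime_errLoc_errEval {α : Fin n → F} (hα : Function.Injective α) (e : Fin n → F) :
    IsCoprime (errLoc F α e) (errEval F α e) := by
  refine IsCoprime.prod_left fun j hj => ?_
  have hej : e j ≠ 0 := (Finset.mem_filter.mp hj).2
  rw [(irreducible_X_sub_C (α j)).coprime_iff_not_dvd, dvd_iff_isRoot, IsRoot.def,
    eval_errEval hej]
  exact mul_ne_zero hej <| Finset.prod_ne_zero_iff.mpr fun k hk =>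
    sub_ne_zero.mpr <| hα.ne (Finset.ne_of_mem_erase hk).symm

lemma algebraMap_mul_synd (α e : Fin n → F) (f : F[X]) :
    algebraMap F[X] (RatFunc F) f * synd F α e =
      algebraMap F[X] (RatFunc F) (f * errEval F α e) /
        algebraMap F[X] (RatFunc F) (errLoc F α e) := by
  rw [synd, ← mul_div_assoc, map_mul]

end ErrorLocator

theorem locator_characterization_RS_general {F : Type*} [Field F] {n : ℕ}
    (α : Fin n → F) (hα : Function.Injective α) (e : Fin n → F)
    (t : ℕ) (ht : t = (Finset.univ.filter (fun j => e j ≠ 0)).card)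
    (f : Polynomial F) :
    ((∀ a : ℤ, -(t : ℤ) ≤ a → a ≤ -1 →
        coeffAtInf (algebraMap (Polynomial F) (RatFunc F) f * synd F α e) a = 0) →
      errLoc F α e ∣ f) ∧
    ((∃ p : Polynomial F,
        algebraMap (Polynomial F) (RatFunc F) f * synd F α e =
          algebraMap (Polynomial F) (RatFunc F) p) →
      errLoc F α e ∣ f) := by
  have hdvd (h0 : ∀ a : ℤ, -(t : ℤ) ≤ a → a ≤ -1 →
      coeffAtInf (algebraMap F[X] (RatFunc F) f * synd F α e) a = 0) : errLoc F α e ∣ f := by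
    rw [algebraMap_mul_synd, ht, ← natDegree_errLoc] at h0
    exact (isCoprime_errLoc_errEval hα e).dvd_of_dvd_mul_right
      (dvd_of_coeffAtInf_div_eq_zero (errLoc_ne_zero α e) h0)
  refine ⟨hdvd, fun ⟨p, hp⟩ => hdvd fun a _ ha => ?_⟩
  rw [hp, coeffAtInf_algebraMap_of_neg p (by omega)]

open scoped Classical in
/-- If the Laurent expansion of `fS` in `1/x` has no terms in degrees `-1, -2, …, -t`,
then `f` is a multiple of the error locator `f^e`.  In particular, if `fS` is a
polynomial then `f^e` divides `f`. -/
theorem locator_characterization_RS {F : Type*} [Field F] [Fintype F] {n : ℕ}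
    (α : Fin n → F) (hα : Function.Injective α) (e : Fin n → F)
    (t : ℕ) (ht : t = (Finset.univ.filter (fun j => e j ≠ 0)).card)
    (f : Polynomial F) :
    ((∀ a : ℤ, -(t : ℤ) ≤ a → a ≤ -1 →
        coeffAtInf (algebraMap (Polynomial F) (RatFunc F) f * synd F α e) a = 0) →
      errLoc F α e ∣ f) ∧
    ((∃ p : Polynomial F,
        algebraMap (Polynomial F) (RatFunc F) f * synd F α e =
          algebraMap (Polynomial F) (RatFunc F) p) →
      errLoc F α e ∣ f) :=
  locator_characterization_RS_general α hα e t ht f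
end

section
/- (Invariants of the Berlekamp–Massey algorithm.) For all m ≥ 0: (1) f^(m) is monic of degree at most m; (2) deg(f^(m)S − φ^(m)) ≤ −m + deg f^(m) − 1 (in particular f^(m)S has no terms in degrees −1, −2, …, −m + deg f^(m)); (3) g^(m)S − ψ^(m) is monic of degree −deg f^(m); (4) deg g^(m) ≤ m − deg f^(m). -/
open Polynomial
open scoped Classical

noncomputable section

variable {F : Type*} [Field F]

variable (F) in
/-- One step of the Berlekamp--Massey algorithm: the state is the quadruple
`(f^(m), φ^(m), g^(m), ψ^(m))`. -/
def BMstep (S : RatFunc F) (m : ℕ)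
    (st : Polynomial F × Polynomial F × Polynomial F × Polynomial F) :
    Polynomial F × Polynomial F × Polynomial F × Polynomial F :=
  let f := st.1
  let φ := st.2.1
  let g := st.2.2.1
  let ψ := st.2.2.2
  let d : ℕ := f.natDegree
  -- μ is the coefficient of x^(d-m-1) in the Laurent expansion of f^(m)·S in 1/x
  let μ : F := coeffAtInf (algebraMap (Polynomial F) (RatFunc F) f * S) ((d : ℤ) - m - 1)
  let p : ℤ := 2 * d - m - 1
  if μ = 0 ∨ 0 ≤ p then
    (f - C μ * X ^ p.toNat * g, φ - C μ * X ^ p.toNat * ψ, g, ψ)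
  else
    (X ^ (-p).toNat * f - C μ * g, X ^ (-p).toNat * φ - C μ * ψ, C μ⁻¹ * f, C μ⁻¹ * φ)

variable (F) in
/-- The Berlekamp--Massey data `(f^(m), φ^(m), g^(m), ψ^(m))`, initialized at
`(1, 0, 0, -1)`. -/
def BM (S : RatFunc F) : ℕ → Polynomial F × Polynomial F × Polynomial F × Polynomial F
  | 0 => (1, 0, 0, -1)
  | m + 1 => BMstep F S m (BM S m)

end

/-!
Write `r = f S - φ` and `s = g S - ψ` for the residuals of the two rows of the state, and
`d = deg f`. The invariants say that `deg r ≤ d - m - 1` and that `s` is monic of degree `-d`. The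
discrepancy `μ` is the coefficient of `r` in degree `d - m - 1`, so a step of the algorithm
multiplies one of `r`, `s` by the power of `x` that aligns their degrees and then subtracts `μ`
times the second from the first to cancel the top coefficient. If it was `r` that had to be shifted
up, then `deg f` grows and `μ⁻¹ r` takes over the role of `s`.
-/

section LaurentExpansionAtInfinity

section CommRing

variable {R : Type*} [CommRing R]

variable (R) in
/-- The Laurent expansion of a polynomial in `1/x`: the variable of the target is `1/x`, so that
the coefficient of `x ^ a` is found in degree `-a`. -/
noncomputable def polyLaurentAtInf : R[X] →+* LaurentSeries R :=
  eval₂RingHom HahnSeries.C (HahnSeries.single (-1) 1)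

lemma polyLaurentAtInf_C (c : R) : polyLaurentAtInf R (C c) = HahnSeries.single 0 c :=
  eval₂_C _ _

lemma polyLaurentAtInf_X_pow (n : ℕ) :
    polyLaurentAtInf R (X ^ n) = HahnSeries.single (-(n : ℤ)) 1 := by
  simp [polyLaurentAtInf]

lemma coeff_polyLaurentAtInf (p : R[X]) (a : ℤ) :
    (polyLaurentAtInf R p).coeff (-a) = if 0 ≤ a then p.coeff a.toNat else 0 := by
  induction p using Polynomial.induction_on' with
  | add p q hp hq =>
    rw [map_add, HahnSeries.coeff_add, hp, hq, coeff_add]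
    split_ifs <;> simp only [add_zero]
  | monomial n c =>
    rw [← C_mul_X_pow_eq_monomial, map_mul, polyLaurentAtInf_C, polyLaurentAtInf_X_pow,
      HahnSeries.single_mul_single, HahnSeries.coeff_single, coeff_C_mul_X_pow]
    split_ifs <;> first | omega | simp

lemma polyLaurentAtInf_injective : Function.Injective (polyLaurentAtInf R) := by
  intro p q hpq
  ext n
  simpa [coeff_polyLaurentAtInf] using congrArg (HahnSeries.coeff · (-(n : ℤ))) hpq

lemma algebraMap_reverse_eq_polyLaurentAtInf_mul_pow (p : R[X]) :
    algebraMap R[X] (LaurentSeries R) p.reverse =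
      polyLaurentAtInf R p * HahnSeries.single 1 1 ^ p.natDegree := by
  let _ : Invertible (HahnSeries.single (-1) 1 : LaurentSeries R) :=
    ⟨HahnSeries.single 1 1, by simp, by simp⟩
  have hinv : ⅟(HahnSeries.single (-1) 1 : LaurentSeries R) = HahnSeries.single 1 1 := rfl
  have hX : algebraMap R[X] (LaurentSeries R) =
      eval₂RingHom HahnSeries.C (HahnSeries.single 1 1) := by
    ext <;> simp
  have hreverse := eval₂_reverse_mul_pow HahnSeries.C (HahnSeries.single (-1) 1) p
  rw [polyLaurentAtInf, coe_eval₂RingHom, ← hreverse, hinv, hX, coe_eval₂RingHom, mul_assoc]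
  simp

end CommRing

variable {F : Type*} [Field F]

variable (F) in
/-- The Laurent expansion of a rational function in `1/x`, with the convention of
`polyLaurentAtInf`. -/
noncomputable def laurentAtInf : RatFunc F →+* LaurentSeries F :=
  RatFunc.liftRingHom (polyLaurentAtInf F)
    (nonZeroDivisors_le_comap_nonZeroDivisors_of_injective _ polyLaurentAtInf_injective)

lemma laurentAtInf_algebraMap (p : F[X]) :
    laurentAtInf F (algebraMap F[X] (RatFunc F) p) = polyLaurentAtInf F p :=
  RatFunc.liftRingHom_algebraMap _ _ p

lemma coeffAtInf_eq_coeff_laurentAtInf (h : RatFunc F) (a : ℤ) :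
    coeffAtInf h a = (laurentAtInf F h).coeff (-a) := by
  have hX : (HahnSeries.single 1 1 : LaurentSeries F) ≠ 0 := by simp
  simp only [coeffAtInf, laurentAtInf, RatFunc.liftRingHom_apply]
  congr 1
  rw [map_mul, map_zpow₀, RatFunc.coe_X, RatFunc.algebraMap_apply_div,
    algebraMap_reverse_eq_polyLaurentAtInf_mul_pow, algebraMap_reverse_eq_polyLaurentAtInf_mul_pow,
    zpow_sub₀ hX, zpow_natCast, zpow_natCast]
  field_simp

lemma coeffAtInf_sub (h k : RatFunc F) (a : ℤ) :
    coeffAtInf (h - k) a = coeffAtInf h a - coeffAtInf k a := by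
  simp only [coeffAtInf_eq_coeff_laurentAtInf, map_sub, HahnSeries.coeff_sub]

lemma coeffAtInf_C_mul (c : F) (h : RatFunc F) (a : ℤ) :
    coeffAtInf (algebraMap F[X] (RatFunc F) (C c) * h) a = c * coeffAtInf h a := by
  simp only [coeffAtInf_eq_coeff_laurentAtInf, map_mul, laurentAtInf_algebraMap,
    polyLaurentAtInf_C, HahnSeries.coeff_single_mul, sub_zero]

lemma coeffAtInf_X_pow_mul (k : ℕ) (h : RatFunc F) (a : ℤ) :
    coeffAtInf (algebraMap F[X] (RatFunc F) (X ^ k) * h) a = coeffAtInf h (a - k) := by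
  simp only [coeffAtInf_eq_coeff_laurentAtInf, map_mul, laurentAtInf_algebraMap,
    polyLaurentAtInf_X_pow, HahnSeries.coeff_single_mul, one_mul]
  congr 1
  ring

lemma coeffAtInf_algebraMap (p : F[X]) (a : ℤ) :
    coeffAtInf (algebraMap F[X] (RatFunc F) p) a = if 0 ≤ a then p.coeff a.toNat else 0 := by
  rw [coeffAtInf_eq_coeff_laurentAtInf, laurentAtInf_algebraMap, coeff_polyLaurentAtInf]

lemma coeffAtInf_one (a : ℤ) : coeffAtInf (1 : RatFunc F) a = if a = 0 then 1 else 0 := by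
  rw [← map_one (algebraMap F[X] (RatFunc F)), coeffAtInf_algebraMap, coeff_one]
  split_ifs <;> first | omega | rfl

lemma order_laurentAtInf_algebraMap {p : F[X]} (hp : p ≠ 0) :
    (laurentAtInf F (algebraMap F[X] (RatFunc F) p)).order = -(p.natDegree : ℤ) := by
  have hcoeff (i : ℤ) := coeffAtInf_algebraMap p (-i)
  simp only [coeffAtInf_eq_coeff_laurentAtInf, neg_neg] at hcoeff
  apply le_antisymm
  · apply HahnSeries.order_le_of_coeff_ne_zero
    simpa [hcoeff] using hp
  · rw [HahnSeries.le_order_iff_forall (by simpa using hp)]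
    intro j hj
    rw [hcoeff, if_pos (by omega)]
    exact coeff_eq_zero_of_natDegree_lt (by omega)

lemma order_laurentAtInf {h : RatFunc F} (hh : h ≠ 0) :
    (laurentAtInf F h).order = -h.intDegree := by
  have hdenom : algebraMap F[X] (RatFunc F) h.denom ≠ 0 := by simp [h.denom_ne_zero]
  have hmul : laurentAtInf F h * laurentAtInf F (algebraMap F[X] (RatFunc F) h.denom) =
      laurentAtInf F (algebraMap F[X] (RatFunc F) h.num) := by
    rw [← map_mul, ← (div_eq_iff hdenom).1 h.num_div_denom]
  have horder := congrArg HahnSeries.order hmul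
  rw [HahnSeries.order_mul (by simpa using hh) (by simpa using hdenom),
    order_laurentAtInf_algebraMap (RatFunc.num_ne_zero hh),
    order_laurentAtInf_algebraMap h.denom_ne_zero] at horder
  rw [RatFunc.intDegree]
  omega

end LaurentExpansionAtInfinity

section DegreeAtInfinity

variable {F : Type*} [Field F] {h k : RatFunc F} {d : ℤ}

/-- The rational function `h` has degree at most `d`, in terms of its Laurent expansion in `1/x`;
the degree of `0` is below every integer. -/
def DegreeAtInfLE (h : RatFunc F) (d : ℤ) : Prop :=
  ∀ a : ℤ, d < a → coeffAtInf h a = 0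

/-- The rational function `h` is monic of degree `d`, in terms of its Laurent expansion in `1/x`. -/
def IsMonicAtInf (h : RatFunc F) (d : ℤ) : Prop :=
  coeffAtInf h d = 1 ∧ DegreeAtInfLE h d

lemma degreeAtInfLE_zero : DegreeAtInfLE (0 : RatFunc F) d := by
  intro a _
  simp [coeffAtInf_eq_coeff_laurentAtInf]

lemma degreeAtInfLE_intDegree (h : RatFunc F) : DegreeAtInfLE h h.intDegree := by
  rcases eq_or_ne h 0 with rfl | hh
  · exact degreeAtInfLE_zero
  intro a ha
  rw [coeffAtInf_eq_coeff_laurentAtInf]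
  exact HahnSeries.coeff_eq_zero_of_lt_order (by rw [order_laurentAtInf hh]; omega)

lemma isMonicAtInf_one : IsMonicAtInf (1 : RatFunc F) 0 :=
  ⟨by rw [coeffAtInf_one, if_pos rfl], fun a ha => by rw [coeffAtInf_one, if_neg ha.ne']⟩

lemma DegreeAtInfLE.of_le {d' : ℤ} (hh : DegreeAtInfLE h d) (hd : d ≤ d') : DegreeAtInfLE h d' :=
  fun a ha => hh a (hd.trans_lt ha)

lemma degreeAtInfLE_div_of_degree_lt {p q : F[X]} (hpq : p.degree < q.degree) :
    DegreeAtInfLE (algebraMap F[X] (RatFunc F) p / algebraMap F[X] (RatFunc F) q) (-1) := by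
  rcases eq_or_ne p 0 with rfl | hp
  · simpa only [map_zero, zero_div] using degreeAtInfLE_zero
  have hq : q ≠ 0 := ne_zero_of_degree_gt hpq
  have hlt : p.natDegree < q.natDegree := natDegree_lt_natDegree hp hpq
  apply (degreeAtInfLE_intDegree _).of_le
  rw [div_eq_mul_inv, RatFunc.intDegree_mul (by simpa using hp) (by simpa using hq),
    RatFunc.intDegree_inv, RatFunc.intDegree_polynomial, RatFunc.intDegree_polynomial]
  omega

lemma DegreeAtInfLE.sub_one (hh : DegreeAtInfLE h d) (hd : coeffAtInf h d = 0) :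
    DegreeAtInfLE h (d - 1) := by
  intro a ha
  obtain rfl | hlt := (show d ≤ a by omega).eq_or_lt
  · exact hd
  · exact hh a hlt

lemma DegreeAtInfLE.X_pow_mul (hh : DegreeAtInfLE h d) (n : ℕ) :
    DegreeAtInfLE (algebraMap F[X] (RatFunc F) (X ^ n) * h) (n + d) := by
  intro a ha
  rw [coeffAtInf_X_pow_mul, hh _ (by omega)]

lemma IsMonicAtInf.X_pow_mul (hh : IsMonicAtInf h d) (n : ℕ) :
    IsMonicAtInf (algebraMap F[X] (RatFunc F) (X ^ n) * h) (n + d) :=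
  ⟨by rw [coeffAtInf_X_pow_mul, add_sub_cancel_left, hh.1], hh.2.X_pow_mul n⟩

lemma DegreeAtInfLE.isMonicAtInf_C_inv_mul (hh : DegreeAtInfLE h d) (hd : coeffAtInf h d ≠ 0) :
    IsMonicAtInf (algebraMap F[X] (RatFunc F) (C (coeffAtInf h d)⁻¹) * h) d :=
  ⟨by rw [coeffAtInf_C_mul, inv_mul_cancel₀ hd],
    fun a ha => by rw [coeffAtInf_C_mul, hh a ha, mul_zero]⟩

lemma DegreeAtInfLE.sub_C_mul (hh : DegreeAtInfLE h d) (hk : IsMonicAtInf k d) :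
    DegreeAtInfLE (h - algebraMap F[X] (RatFunc F) (C (coeffAtInf h d)) * k) (d - 1) := by
  apply DegreeAtInfLE.sub_one
  · intro a ha
    rw [coeffAtInf_sub, coeffAtInf_C_mul, hh a ha, hk.2 a ha, mul_zero, sub_zero]
  · rw [coeffAtInf_sub, coeffAtInf_C_mul, hk.1, mul_one, sub_self]

end DegreeAtInfinity

section BerlekampMassey

variable {F : Type*} [Field F] {S : RatFunc F} {m : ℕ} {f φ g ψ : F[X]}

/-- The residual `f S - φ` of a row `(f, φ)` of the Berlekamp-Massey state, whose degree measures
how well `φ / f` approximates `S`. -/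
noncomputable def rowResidual (S : RatFunc F) (f φ : F[X]) : RatFunc F :=
  algebraMap F[X] (RatFunc F) f * S - algebraMap F[X] (RatFunc F) φ

/-- The discrepancy `μ` at step `m` of the algorithm, the coefficient that the step cancels. -/
noncomputable def discrepancy (S : RatFunc F) (m : ℕ) (f : F[X]) : F :=
  coeffAtInf (algebraMap F[X] (RatFunc F) f * S) ((f.natDegree : ℤ) - m - 1)

lemma rowResidual_sub (S : RatFunc F) (f φ g ψ : F[X]) :
    rowResidual S (f - g) (φ - ψ) = rowResidual S f φ - rowResidual S g ψ := by
  simp only [rowResidual, map_sub]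
  ring

lemma rowResidual_mul (S : RatFunc F) (p f φ : F[X]) :
    rowResidual S (p * f) (p * φ) = algebraMap F[X] (RatFunc F) p * rowResidual S f φ := by
  simp only [rowResidual, map_mul]
  ring

lemma coeffAtInf_rowResidual_of_neg (S : RatFunc F) (f φ : F[X]) {a : ℤ} (ha : a < 0) :
    coeffAtInf (rowResidual S f φ) a = coeffAtInf (algebraMap F[X] (RatFunc F) f * S) a := by
  rw [rowResidual, coeffAtInf_sub, coeffAtInf_algebraMap, if_neg ha.not_ge, sub_zero]

lemma BMstep_of_discrepancy_eq_zero (hμ : discrepancy S m f = 0) :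
    BMstep F S m (f, φ, g, ψ) = (f, φ, g, ψ) := by
  simp only [discrepancy] at hμ
  simp [BMstep, hμ]

lemma BMstep_of_nonneg (hp : 0 ≤ 2 * (f.natDegree : ℤ) - m - 1) :
    BMstep F S m (f, φ, g, ψ) =
      (f - C (discrepancy S m f) * X ^ (2 * (f.natDegree : ℤ) - m - 1).toNat * g,
        φ - C (discrepancy S m f) * X ^ (2 * (f.natDegree : ℤ) - m - 1).toNat * ψ, g, ψ) :=
  if_pos (Or.inr hp)

lemma BMstep_of_neg (hμ : discrepancy S m f ≠ 0) (hp : 2 * (f.natDegree : ℤ) - m - 1 < 0) :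
    BMstep F S m (f, φ, g, ψ) =
      (X ^ (-(2 * (f.natDegree : ℤ) - m - 1)).toNat * f - C (discrepancy S m f) * g,
        X ^ (-(2 * (f.natDegree : ℤ) - m - 1)).toNat * φ - C (discrepancy S m f) * ψ,
        C (discrepancy S m f)⁻¹ * f, C (discrepancy S m f)⁻¹ * φ) :=
  if_neg (not_or.2 ⟨hμ, hp.not_ge⟩)

/-- The property of the state `(f, φ, g, ψ)` after `m` steps that every step of the
Berlekamp-Massey algorithm preserves. -/
structure BMInvariant (S : RatFunc F) (m : ℕ) (st : F[X] × F[X] × F[X] × F[X]) : Prop where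
  monic : st.1.Monic
  natDegree_le : st.1.natDegree ≤ m
  degreeAtInfLE_rowResidual :
    DegreeAtInfLE (rowResidual S st.1 st.2.1) ((st.1.natDegree : ℤ) - m - 1)
  isMonicAtInf_rowResidual : IsMonicAtInf (rowResidual S st.2.2.1 st.2.2.2) (-(st.1.natDegree : ℤ))
  natDegree_add_le : st.2.2.1.natDegree + st.1.natDegree ≤ m

namespace BMInvariant

lemma initial (hS : DegreeAtInfLE S (-1)) : BMInvariant S 0 (1, 0, 0, -1) where
  monic := monic_one
  natDegree_le := natDegree_one.le
  degreeAtInfLE_rowResidual := by simpa [rowResidual] using hS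
  isMonicAtInf_rowResidual := by simpa [rowResidual] using isMonicAtInf_one (F := F)
  natDegree_add_le := by simp

lemma coeffAtInf_rowResidual (h : BMInvariant S m (f, φ, g, ψ)) :
    coeffAtInf (rowResidual S f φ) ((f.natDegree : ℤ) - m - 1) = discrepancy S m f := by
  have hd : f.natDegree ≤ m := h.natDegree_le
  exact coeffAtInf_rowResidual_of_neg S f φ (by omega)

lemma of_discrepancy_eq_zero (h : BMInvariant S m (f, φ, g, ψ)) (hμ : discrepancy S m f = 0) :
    BMInvariant S (m + 1) (f, φ, g, ψ) where
  monic := h.monic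
  natDegree_le := h.natDegree_le.trans m.le_succ
  degreeAtInfLE_rowResidual :=
    (h.degreeAtInfLE_rowResidual.sub_one (h.coeffAtInf_rowResidual.trans hμ)).of_le
      (by push_cast; omega)
  isMonicAtInf_rowResidual := h.isMonicAtInf_rowResidual
  natDegree_add_le := h.natDegree_add_le.trans m.le_succ

lemma shift_second_row (h : BMInvariant S m (f, φ, g, ψ)) {n : ℕ}
    (hn : (n : ℤ) = 2 * f.natDegree - m - 1) :
    BMInvariant S (m + 1) (f - C (discrepancy S m f) * X ^ n * g,
      φ - C (discrepancy S m f) * X ^ n * ψ, g, ψ) := by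
  set μ := discrepancy S m f
  have hg : g.natDegree + f.natDegree ≤ m := h.natDegree_add_le
  have hlt : (C μ * X ^ n * g).natDegree < f.natDegree := by
    have := natDegree_mul_le_of_le (natDegree_C_mul_X_pow_le μ n) (le_refl g.natDegree)
    omega
  have hdeg : (f - C μ * X ^ n * g).natDegree = f.natDegree :=
    natDegree_sub_eq_left_of_natDegree_lt hlt
  have haligned : IsMonicAtInf (algebraMap F[X] (RatFunc F) (X ^ n) * rowResidual S g ψ)
      ((f.natDegree : ℤ) - m - 1) := by
    convert h.isMonicAtInf_rowResidual.X_pow_mul n using 1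
    dsimp only
    omega
  have hres := h.degreeAtInfLE_rowResidual.sub_C_mul haligned
  rw [h.coeffAtInf_rowResidual, ← rowResidual_mul, ← rowResidual_mul, ← rowResidual_sub,
    ← mul_assoc, ← mul_assoc] at hres
  exact {
    monic := h.monic.sub_of_left (degree_lt_degree hlt)
    natDegree_le := hdeg.le.trans (h.natDegree_le.trans m.le_succ)
    degreeAtInfLE_rowResidual := hres.of_le (by simp only [hdeg]; push_cast; omega)
    isMonicAtInf_rowResidual := by simpa only [hdeg] using h.isMonicAtInf_rowResidual
    natDegree_add_le := by simp only [hdeg]; omega }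

lemma shift_first_row (h : BMInvariant S m (f, φ, g, ψ)) {n : ℕ}
    (hn : (n : ℤ) = -(2 * f.natDegree - m - 1)) (hμ : discrepancy S m f ≠ 0) :
    BMInvariant S (m + 1) (X ^ n * f - C (discrepancy S m f) * g,
      X ^ n * φ - C (discrepancy S m f) * ψ,
      C (discrepancy S m f)⁻¹ * f, C (discrepancy S m f)⁻¹ * φ) := by
  set μ := discrepancy S m f with hμ_def
  have hg : g.natDegree + f.natDegree ≤ m := h.natDegree_add_le
  have hf : f.Monic := h.monic
  have hX : (X ^ n * f).natDegree = f.natDegree + n := natDegree_X_pow_mul n hf.ne_zero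
  have hlt : (C μ * g).natDegree < (X ^ n * f).natDegree := by
    have := natDegree_C_mul_le μ g
    omega
  have hdeg : (X ^ n * f - C μ * g).natDegree = f.natDegree + n := by
    rw [natDegree_sub_eq_left_of_natDegree_lt hlt, hX]
  have hcoeff : coeffAtInf (algebraMap F[X] (RatFunc F) (X ^ n) * rowResidual S f φ)
      (-(f.natDegree : ℤ)) = μ := by
    rw [coeffAtInf_X_pow_mul, hμ_def, ← h.coeffAtInf_rowResidual]
    congr 1
    omega
  have haligned : DegreeAtInfLE (algebraMap F[X] (RatFunc F) (X ^ n) * rowResidual S f φ)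
      (-(f.natDegree : ℤ)) :=
    (h.degreeAtInfLE_rowResidual.X_pow_mul n).of_le (by dsimp only; omega)
  have hres := haligned.sub_C_mul h.isMonicAtInf_rowResidual
  rw [hcoeff, ← rowResidual_mul, ← rowResidual_mul, ← rowResidual_sub] at hres
  have hscaled := h.degreeAtInfLE_rowResidual.isMonicAtInf_C_inv_mul
    (by rwa [h.coeffAtInf_rowResidual])
  rw [h.coeffAtInf_rowResidual, ← rowResidual_mul] at hscaled
  have hdegC : (C μ⁻¹ * f).natDegree ≤ f.natDegree := natDegree_C_mul_le μ⁻¹ f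
  exact {
    monic := ((monic_X_pow n).mul hf).sub_of_left (degree_lt_degree hlt)
    natDegree_le := by simp only [hdeg]; omega
    degreeAtInfLE_rowResidual := hres.of_le (by simp only [hdeg]; push_cast; omega)
    isMonicAtInf_rowResidual := by convert hscaled using 1; simp only [hdeg]; push_cast; omega
    natDegree_add_le := by simp only [hdeg]; omega }

lemma step {st : F[X] × F[X] × F[X] × F[X]} (h : BMInvariant S m st) :
    BMInvariant S (m + 1) (BMstep F S m st) := by
  obtain ⟨f, φ, g, ψ⟩ := st
  by_cases hμ : discrepancy S m f = 0
  · rw [BMstep_of_discrepancy_eq_zero hμ]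
    exact h.of_discrepancy_eq_zero hμ
  rcases le_or_gt 0 (2 * (f.natDegree : ℤ) - m - 1) with hp | hp
  · rw [BMstep_of_nonneg hp]
    exact h.shift_second_row (Int.toNat_of_nonneg hp)
  · rw [BMstep_of_neg hμ hp]
    exact h.shift_first_row (Int.toNat_of_nonneg (by omega)) hμ

end BMInvariant

end BerlekampMassey

section Syndrome

variable {F : Type*} [Field F]

lemma degree_errEval_lt_degree_errLoc {n : ℕ} (α e : Fin n → F) :
    (errEval F α e).degree < (errLoc F α e).degree := by
  have hdeg (s : Finset (Fin n)) : (∏ j ∈ s, (X - C (α j))).degree = (s.card : WithBot ℕ) := by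
    simp [degree_prod]
  unfold errEval errLoc
  rw [hdeg]
  refine (degree_sum_le _ _).trans_lt ((Finset.sup_lt_iff (WithBot.bot_lt_coe _)).2 fun j hj => ?_)
  rw [degree_C_mul (Finset.mem_filter.1 hj).2, hdeg]
  exact_mod_cast Finset.card_erase_lt_of_mem hj

lemma degreeAtInfLE_synd {n : ℕ} (α e : Fin n → F) : DegreeAtInfLE (synd F α e) (-1) :=
  degreeAtInfLE_div_of_degree_lt (degree_errEval_lt_degree_errLoc α e)

end Syndrome

theorem berlekamp_massey_invariants_general {F : Type*} [Field F] {S : RatFunc F}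
    (hS : DegreeAtInfLE S (-1)) (m : ℕ) : BMInvariant S m (BM F S m) := by
  induction m with
  | zero => exact BMInvariant.initial hS
  | succ m ih => exact ih.step

/-- **Invariants of the Berlekamp--Massey algorithm** (Theorem `t:BM`):
for all `m ≥ 0`, writing `(f^(m), φ^(m), g^(m), ψ^(m)) = BM S m` and `d = deg f^(m)`:
(1) `f^(m)` is monic of degree at most `m`;
(2) `deg (f^(m)S - φ^(m)) ≤ -m + d - 1`;
(3) `g^(m)S - ψ^(m)` is monic of degree `-d`;
(4) `deg g^(m) ≤ m - d`.
Degree statements about rational functions are expressed via the coefficients of the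
Laurent expansion in `1/x`. -/
theorem berlekamp_massey_invariants {F : Type*} [Field F] [Fintype F] {n : ℕ}
    (α : Fin n → F) (hα : Function.Injective α) (e : Fin n → F)
    (S : RatFunc F) (hS : S = synd F α e) (m : ℕ) :
    ((BM F S m).1.Monic ∧ (BM F S m).1.natDegree ≤ m) ∧
    (∀ a : ℤ, ((BM F S m).1.natDegree : ℤ) - m - 1 < a →
      coeffAtInf (algebraMap (Polynomial F) (RatFunc F) (BM F S m).1 * S -
        algebraMap (Polynomial F) (RatFunc F) (BM F S m).2.1) a = 0) ∧
    (coeffAtInf (algebraMap (Polynomial F) (RatFunc F) (BM F S m).2.2.1 * S -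
        algebraMap (Polynomial F) (RatFunc F) (BM F S m).2.2.2)
        (-((BM F S m).1.natDegree : ℤ)) = 1 ∧
      ∀ a : ℤ, -((BM F S m).1.natDegree : ℤ) < a →
        coeffAtInf (algebraMap (Polynomial F) (RatFunc F) (BM F S m).2.2.1 * S -
          algebraMap (Polynomial F) (RatFunc F) (BM F S m).2.2.2) a = 0) ∧
    ((BM F S m).2.2.1.natDegree : ℤ) ≤ (m : ℤ) - (BM F S m).1.natDegree := by
  subst hS
  have h := berlekamp_massey_invariants_general (degreeAtInfLE_synd α e) m
  exact ⟨⟨h.monic, h.natDegree_le⟩, h.degreeAtInfLE_rowResidual, h.isMonicAtInf_rowResidual,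
    by have := h.natDegree_add_le; omega⟩
end

section
/- For all m ≥ 0, the polynomial f^(m) produced by the Berlekamp–Massey algorithm satisfies deg f^(m) ≤ t, where t is the weight of the error vector e. -/
open Polynomial
open scoped Classical

/-!
Let `d` be the degree of the monic polynomial `f`. If `S` has negative degree, the algorithm
maintains that `f S - φ` has degree less than `d - m` and that `g S - ψ` is monic of degree exactly
`-d`: the discrepancy `μ` is the next coefficient of `f S - φ`, and a step eliminates it with the
monic function `g S - ψ`. When this raises the degree of `f`, the old `f S - φ`, divided by its
leading coefficient `μ`, becomes the new `g S - ψ`. Now `g S - ψ` is a nonzero rational function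
whose denominator divides that of `S`, so its degree `-d` is at least minus the degree of that
denominator.

Since `d ≤ m`, the coefficients of `f S` that the algorithm reads have negative exponents, so
subtracting a polynomial from `S` does not change the run, and a syndrome of nonnegative degree
obeys the same bound.
-/

namespace BerlekampMassey

variable {F : Type*} [Field F]

lemma eval₂_inv_eq_zpow_mul_eval₂_reverse {R L : Type*} [Semiring R] [Field L] (i : R →+* L)
    {x : L} (hx : x ≠ 0) (p : R[X]) :
    p.eval₂ i x⁻¹ = x ^ (-(p.natDegree : ℤ)) * p.reverse.eval₂ i x := by
  let : Invertible x⁻¹ := ⟨x, mul_inv_cancel₀ hx, inv_mul_cancel₀ hx⟩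
  have h : p.reverse.eval₂ i x * x⁻¹ ^ p.natDegree = p.eval₂ i x⁻¹ :=
    eval₂_reverse_mul_pow i x⁻¹ p
  rw [← h, mul_comm, zpow_neg, zpow_natCast, inv_pow]

/-- The Laurent expansion of a polynomial at infinity. The variable of the Laurent series is `1/x`,
so exponents change sign. -/
noncomputable def expandPoly : F[X] →+* LaurentSeries F :=
  eval₂RingHom HahnSeries.C (HahnSeries.single (-1) 1)

lemma expandPoly_monomial (n : ℕ) (c : F) :
    expandPoly (monomial n c) = HahnSeries.single (-(n : ℤ)) c := by
  simp [expandPoly, eval₂_monomial, HahnSeries.single_pow, HahnSeries.C_apply]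

lemma coeff_expandPoly_neg (p : F[X]) (k : ℕ) : (expandPoly p).coeff (-(k : ℤ)) = p.coeff k := by
  induction p using Polynomial.induction_on' with
  | add p q hp hq => simp [hp, hq]
  | monomial n c => simp [expandPoly_monomial, coeff_monomial, HahnSeries.coeff_single, eq_comm]

lemma coeff_expandPoly_of_pos (p : F[X]) {k : ℤ} (hk : 0 < k) : (expandPoly p).coeff k = 0 := by
  induction p using Polynomial.induction_on' with
  | add p q hp hq => simp [hp, hq]
  | monomial n c => rw [expandPoly_monomial, HahnSeries.coeff_single_of_ne (by lia)]

lemma expandPoly_injective : Function.Injective (expandPoly : F[X] →+* LaurentSeries F) := by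
  intro p q h
  ext k
  rw [← coeff_expandPoly_neg, h, coeff_expandPoly_neg]

lemma order_expandPoly {p : F[X]} (hp : p ≠ 0) : (expandPoly p).order = -(p.natDegree : ℤ) := by
  have hp' : expandPoly p ≠ 0 := (map_ne_zero_iff _ expandPoly_injective).2 hp
  refine le_antisymm (HahnSeries.order_le_of_coeff_ne_zero ?_)
    ((HahnSeries.le_order_iff_forall hp').2 fun k hk => ?_)
  · simpa [coeff_expandPoly_neg] using hp
  · obtain ⟨j, rfl⟩ : ∃ j : ℕ, k = -(j : ℤ) := ⟨(-k).toNat, by lia⟩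
    rw [coeff_expandPoly_neg, coeff_eq_zero_of_natDegree_lt (by lia)]

/-- The Laurent expansion of a rational function at infinity, as a Laurent series in `1/x`. -/
noncomputable def expandAtInf : RatFunc F →+* LaurentSeries F :=
  RatFunc.liftRingHom expandPoly
    (nonZeroDivisors_le_comap_nonZeroDivisors_of_injective _ expandPoly_injective)

lemma expandAtInf_algebraMap (p : F[X]) :
    expandAtInf (algebraMap F[X] (RatFunc F) p) = expandPoly p :=
  RatFunc.liftRingHom_algebraMap _ _ _

lemma order_expandAtInf {h : RatFunc F} (hh : h ≠ 0) : (expandAtInf h).order = -h.intDegree := by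
  have hmul : expandAtInf h * expandPoly h.denom = expandPoly h.num := by
    rw [← expandAtInf_algebraMap, ← expandAtInf_algebraMap, ← map_mul]
    congr 1
    nth_rw 1 [← RatFunc.num_div_denom h]
    exact div_mul_cancel₀ _ (RatFunc.algebraMap_ne_zero h.denom_ne_zero)
  have hadd := HahnSeries.order_mul ((_root_.map_ne_zero expandAtInf).2 hh)
    ((map_ne_zero_iff _ expandPoly_injective).2 h.denom_ne_zero)
  rw [hmul, order_expandPoly (RatFunc.num_ne_zero hh), order_expandPoly h.denom_ne_zero] at hadd
  rw [RatFunc.intDegree]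
  lia

lemma coe_algebraMap_eq_eval₂ (p : F[X]) :
    ((algebraMap F[X] (RatFunc F) p : RatFunc F) : LaurentSeries F) =
      p.eval₂ HahnSeries.C (HahnSeries.single 1 1) := by
  refine (RatFunc.coe_coe p).symm.trans ?_
  induction p using Polynomial.induction_on' with
  | add p q hp hq => simp [hp, hq, eval₂_add]
  | monomial n c => simp [← C_mul_X_pow_eq_monomial, eval₂_mul]

lemma coeffAtInf_eq_coeff_expandAtInf (h : RatFunc F) (a : ℤ) :
    coeffAtInf h a = (expandAtInf h).coeff (-a) := by
  have hX : (HahnSeries.single 1 1 : LaurentSeries F) ≠ 0 := by simp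
  have hX_inv : (HahnSeries.single 1 1 : LaurentSeries F)⁻¹ = HahnSeries.single (-1) 1 := by simp
  have hpoly (p : F[X]) : expandPoly p = HahnSeries.single 1 1 ^ (-(p.natDegree : ℤ)) *
      ((algebraMap F[X] (RatFunc F) p.reverse : RatFunc F) : LaurentSeries F) := by
    rw [coe_algebraMap_eq_eval₂, ← eval₂_inv_eq_zpow_mul_eval₂_reverse _ hX, hX_inv, expandPoly,
      coe_eval₂RingHom]
  rw [coeffAtInf, expandAtInf, RatFunc.liftRingHom_apply, hpoly, hpoly, mul_div_mul_comm,
    ← zpow_sub₀ hX, map_mul, map_div₀, map_zpow₀, RatFunc.coe_X, neg_sub_neg]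

lemma coeffAtInf_sub (h k : RatFunc F) (a : ℤ) :
    coeffAtInf (h - k) a = coeffAtInf h a - coeffAtInf k a := by
  simp only [coeffAtInf_eq_coeff_expandAtInf, map_sub, HahnSeries.coeff_sub]

lemma coeffAtInf_monomial_mul (n : ℕ) (c : F) (h : RatFunc F) (a : ℤ) :
    coeffAtInf (algebraMap F[X] (RatFunc F) (monomial n c) * h) a = c * coeffAtInf h (a - n) := by
  rw [coeffAtInf_eq_coeff_expandAtInf, coeffAtInf_eq_coeff_expandAtInf, map_mul,
    expandAtInf_algebraMap, expandPoly_monomial, HahnSeries.coeff_single_mul]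
  congr 2
  ring

lemma coeffAtInf_algebraMap_natCast (p : F[X]) (k : ℕ) :
    coeffAtInf (algebraMap F[X] (RatFunc F) p) k = p.coeff k := by
  rw [coeffAtInf_eq_coeff_expandAtInf, expandAtInf_algebraMap, coeff_expandPoly_neg]

lemma coeffAtInf_algebraMap_of_neg (p : F[X]) {a : ℤ} (ha : a < 0) :
    coeffAtInf (algebraMap F[X] (RatFunc F) p) a = 0 := by
  rw [coeffAtInf_eq_coeff_expandAtInf, expandAtInf_algebraMap,
    coeff_expandPoly_of_pos p (neg_pos.2 ha)]

lemma coeffAtInf_intDegree_ne_zero {h : RatFunc F} (hh : h ≠ 0) :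
    coeffAtInf h h.intDegree ≠ 0 := by
  rw [coeffAtInf_eq_coeff_expandAtInf, ← order_expandAtInf hh, Ne,
    HahnSeries.coeff_order_eq_zero]
  exact (_root_.map_ne_zero expandAtInf).2 hh

/-- The degree of `h` is less than `d`, where `0` has degree less than every integer. -/
def DegreeLT (h : RatFunc F) (d : ℤ) : Prop :=
  ∀ a, d ≤ a → coeffAtInf h a = 0

/-- `h` is monic of degree `d` in the sense of Laurent expansions at infinity. -/
structure IsMonicAtInf (h : RatFunc F) (d : ℤ) : Prop where
  coeff_eq_one : coeffAtInf h d = 1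
  degreeLT : DegreeLT h (d + 1)

lemma degreeLT_intDegree_add_one (h : RatFunc F) : DegreeLT h (h.intDegree + 1) := by
  intro a ha
  rw [coeffAtInf_eq_coeff_expandAtInf]
  obtain rfl | hh := eq_or_ne h 0
  · simp
  · exact HahnSeries.coeff_eq_zero_of_lt_order (by rw [order_expandAtInf hh]; lia)

lemma DegreeLT.of_add_one {h : RatFunc F} {d : ℤ} (hh : DegreeLT h (d + 1))
    (hd : coeffAtInf h d = 0) : DegreeLT h d := by
  intro a ha
  obtain rfl | hlt := ha.eq_or_lt
  · exact hd
  · exact hh a hlt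

lemma IsMonicAtInf.ne_zero {h : RatFunc F} {d : ℤ} (hh : IsMonicAtInf h d) : h ≠ 0 := by
  rintro rfl
  simpa [coeffAtInf_eq_coeff_expandAtInf] using hh.coeff_eq_one

lemma IsMonicAtInf.intDegree_le {h : RatFunc F} {d : ℤ} (hh : IsMonicAtInf h d) :
    h.intDegree ≤ d := by
  by_contra! hlt
  exact coeffAtInf_intDegree_ne_zero hh.ne_zero (hh.degreeLT _ hlt)

lemma isMonicAtInf_one : IsMonicAtInf (1 : RatFunc F) 0 where
  coeff_eq_one := by simpa using coeffAtInf_algebraMap_natCast (1 : F[X]) 0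
  degreeLT := by simpa using degreeLT_intDegree_add_one (1 : RatFunc F)

lemma isMonicAtInf_C_inv_mul {h : RatFunc F} {d : ℤ} (hh : DegreeLT h (d + 1))
    (hd : coeffAtInf h d ≠ 0) :
    IsMonicAtInf (algebraMap F[X] (RatFunc F) (C (coeffAtInf h d)⁻¹) * h) d := by
  rw [← monomial_zero_left]
  refine ⟨?_, fun a ha => ?_⟩
  · rw [coeffAtInf_monomial_mul, Nat.cast_zero, sub_zero, inv_mul_cancel₀ hd]
  · rw [coeffAtInf_monomial_mul, Nat.cast_zero, sub_zero, hh a ha, mul_zero]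

lemma DegreeLT.cancel_leading {h k : RatFunc F} {a b : ℤ} (hh : DegreeLT h (a + 1))
    (hk : IsMonicAtInf k b) {i j : ℕ} (hij : a + i = b + j) :
    DegreeLT (algebraMap F[X] (RatFunc F) (X ^ i) * h -
      algebraMap F[X] (RatFunc F) (C (coeffAtInf h a) * X ^ j) * k) (a + i) := by
  rw [C_mul_X_pow_eq_monomial, X_pow_eq_monomial]
  apply DegreeLT.of_add_one
  · intro c hc
    rw [coeffAtInf_sub, coeffAtInf_monomial_mul, coeffAtInf_monomial_mul, hh _ (by lia),
      hk.degreeLT _ (by lia), mul_zero, mul_zero, sub_zero]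
  · rw [coeffAtInf_sub, coeffAtInf_monomial_mul, coeffAtInf_monomial_mul, add_sub_cancel_right,
      hij, add_sub_cancel_right, hk.coeff_eq_one, one_mul, mul_one, sub_self]

lemma exists_degreeLT_zero_sub (S : RatFunc F) :
    ∃ A : F[X], DegreeLT (S - algebraMap F[X] (RatFunc F) A) 0 := by
  let N := S.intDegree.toNat
  refine ⟨∑ i ∈ Finset.range (N + 1), monomial i (coeffAtInf S i), fun a ha => ?_⟩
  lift a to ℕ using ha
  rw [coeffAtInf_sub, coeffAtInf_algebraMap_natCast, finsetSum_coeff]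
  simp only [coeff_monomial, Finset.sum_ite_eq', Finset.mem_range]
  split_ifs with haN
  · exact sub_self _
  · rw [degreeLT_intDegree_add_one S a (by lia), sub_zero]

/-- The residual `f S - φ` of a pair `(f, φ)`, as in Padé approximation of `S` by
`φ / f`. -/
noncomputable def padeResidual (S : RatFunc F) (f φ : F[X]) : RatFunc F :=
  algebraMap F[X] (RatFunc F) f * S - algebraMap F[X] (RatFunc F) φ

lemma padeResidual_sub (S : RatFunc F) (f φ g ψ : F[X]) :
    padeResidual S (f - g) (φ - ψ) = padeResidual S f φ - padeResidual S g ψ := by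
  simp only [padeResidual, map_sub]
  ring

lemma padeResidual_mul (S : RatFunc F) (p f φ : F[X]) :
    padeResidual S (p * f) (p * φ) = algebraMap F[X] (RatFunc F) p * padeResidual S f φ := by
  simp only [padeResidual, map_mul]
  ring

lemma coeffAtInf_padeResidual_sub_of_neg (S : RatFunc F) (A f φ : F[X]) {a : ℤ} (ha : a < 0) :
    coeffAtInf (padeResidual (S - algebraMap F[X] (RatFunc F) A) f φ) a =
      coeffAtInf (algebraMap F[X] (RatFunc F) f * S) a := by
  rw [padeResidual, mul_sub, ← map_mul, coeffAtInf_sub, coeffAtInf_sub,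
    coeffAtInf_algebraMap_of_neg _ ha, coeffAtInf_algebraMap_of_neg _ ha, sub_zero, sub_zero]

lemma natDegree_denom_padeResidual_le (S : RatFunc F) (f φ : F[X]) :
    (padeResidual S f φ).denom.natDegree ≤ S.denom.natDegree := by
  have hS : algebraMap F[X] (RatFunc F) S.denom ≠ 0 :=
    RatFunc.algebraMap_ne_zero S.denom_ne_zero
  refine natDegree_le_of_dvd ((RatFunc.denom_dvd S.denom_ne_zero).2
    ⟨f * S.num - φ * S.denom, ?_⟩) S.denom_ne_zero
  nth_rw 1 [padeResidual, ← RatFunc.num_div_denom S]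
  simp only [map_sub, map_mul]
  field_simp

section Invariant

/-- The invariant of the Berlekamp–Massey state `(f, φ; g, ψ)` after `m` steps on a syndrome `S` of
negative degree. -/
structure Invariant (S : RatFunc F) (m : ℕ) (f φ g ψ : F[X]) : Prop where
  monic : f.Monic
  natDegree_add_le : g.natDegree + f.natDegree ≤ m
  degreeLT : DegreeLT (padeResidual S f φ) (f.natDegree - m)
  isMonicAtInf : IsMonicAtInf (padeResidual S g ψ) (-f.natDegree)

variable {S : RatFunc F} {m : ℕ} {f φ g ψ : F[X]}

lemma Invariant.zero (hS : DegreeLT S 0) : Invariant S 0 1 0 0 (-1) where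
  monic := monic_one
  natDegree_add_le := by simp
  degreeLT := by simpa [padeResidual] using hS
  isMonicAtInf := by simpa [padeResidual] using isMonicAtInf_one

lemma Invariant.succ_of_coeff_eq_zero (h : Invariant S m f φ g ψ)
    (hμ : coeffAtInf (padeResidual S f φ) (f.natDegree - m - 1) = 0) :
    Invariant S (m + 1) f φ g ψ where
  monic := h.monic
  natDegree_add_le := h.natDegree_add_le.trans m.le_succ
  degreeLT := by
    rw [Nat.cast_succ, ← sub_sub]
    exact DegreeLT.of_add_one (by simpa using h.degreeLT) hμ
  isMonicAtInf := h.isMonicAtInf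

lemma Invariant.succ_of_lt_two_mul_natDegree (h : Invariant S m f φ g ψ) {μ : F} {p : ℕ}
    (hp : p + m + 1 = 2 * f.natDegree)
    (hμ : coeffAtInf (padeResidual S f φ) (f.natDegree - m - 1) = μ) :
    Invariant S (m + 1) (f - C μ * X ^ p * g) (φ - C μ * X ^ p * ψ) g ψ := by
  have hgf := h.natDegree_add_le
  have hlt : (C μ * X ^ p * g).natDegree < f.natDegree := by
    have := natDegree_C_mul_X_pow_le μ p
    exact natDegree_mul_le.trans_lt (by lia)
  have hd : (f - C μ * X ^ p * g).natDegree = f.natDegree :=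
    natDegree_sub_eq_left_of_natDegree_lt hlt
  have hcancel := DegreeLT.cancel_leading (a := f.natDegree - m - 1) (i := 0) (j := p)
    (by simpa using h.degreeLT) h.isMonicAtInf (by lia)
  refine ⟨h.monic.sub_of_left (degree_lt_degree hlt), ?_, ?_, ?_⟩
  · lia
  · rw [padeResidual_sub, padeResidual_mul, hd]
    convert hcancel using 1
    · rw [hμ, pow_zero, map_one, one_mul]
    · push_cast
      ring
  · rw [hd]
    exact h.isMonicAtInf

lemma Invariant.succ_of_two_mul_natDegree_le (h : Invariant S m f φ g ψ) {μ : F} {p : ℕ}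
    (hp : p + 2 * f.natDegree = m + 1)
    (hμ : coeffAtInf (padeResidual S f φ) (f.natDegree - m - 1) = μ) (hμ0 : μ ≠ 0) :
    Invariant S (m + 1) (X ^ p * f - C μ * g) (X ^ p * φ - C μ * ψ) (C μ⁻¹ * f) (C μ⁻¹ * φ) := by
  have hgf := h.natDegree_add_le
  have hmonic : (X ^ p * f).Monic := (monic_X_pow p).mul h.monic
  have hXf : (X ^ p * f).natDegree = p + f.natDegree := by
    rw [(monic_X_pow p).natDegree_mul h.monic, natDegree_X_pow]
  have hlt : (C μ * g).natDegree < (X ^ p * f).natDegree :=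
    (natDegree_C_mul_le μ g).trans_lt (by lia)
  have hd : (X ^ p * f - C μ * g).natDegree = p + f.natDegree :=
    (natDegree_sub_eq_left_of_natDegree_lt hlt).trans hXf
  have hA : DegreeLT (padeResidual S f φ) (f.natDegree - m - 1 + 1) := by simpa using h.degreeLT
  have hcancel := hA.cancel_leading (i := p) (j := 0) h.isMonicAtInf (by lia)
  refine ⟨hmonic.sub_of_left (degree_lt_degree hlt), ?_, ?_, ?_⟩
  · have := natDegree_C_mul_le μ⁻¹ f
    lia
  · rw [padeResidual_sub, padeResidual_mul, padeResidual_mul, hd]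
    convert hcancel using 1
    · simp [hμ]
    · push_cast
      ring
  · rw [padeResidual_mul, hd, ← hμ]
    convert isMonicAtInf_C_inv_mul hA (hμ ▸ hμ0) using 1
    lia

/-- The algorithm runs on `S` while the invariant is about `S` minus a polynomial: the discrepancy
has a negative exponent, where the two agree. -/
lemma Invariant.step {A : F[X]}
    (h : Invariant (S - algebraMap F[X] (RatFunc F) A) m f φ g ψ) :
    let st := BMstep F S m (f, φ, g, ψ)
    Invariant (S - algebraMap F[X] (RatFunc F) A) (m + 1) st.1 st.2.1 st.2.2.1 st.2.2.2 := by
  have hle : f.natDegree ≤ m := le_of_add_le_right h.natDegree_add_le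
  have hμ := coeffAtInf_padeResidual_sub_of_neg S A f φ (a := f.natDegree - m - 1) (by lia)
  simp only [BMstep]
  set μ := coeffAtInf (algebraMap F[X] (RatFunc F) f * S) (f.natDegree - m - 1)
  split_ifs with hc
  · by_cases hp : (0 : ℤ) ≤ 2 * f.natDegree - m - 1
    · exact h.succ_of_lt_two_mul_natDegree (by lia) hμ
    · have hμ0 : μ = 0 := hc.resolve_right hp
      simpa [hμ0] using h.succ_of_coeff_eq_zero (hμ.trans hμ0)
  · push Not at hc
    exact h.succ_of_two_mul_natDegree_le (by lia) hμ hc.1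

variable (m) in
lemma invariant_BM {A : F[X]} (hA : DegreeLT (S - algebraMap F[X] (RatFunc F) A) 0) :
    Invariant (S - algebraMap F[X] (RatFunc F) A) m
      (BM F S m).1 (BM F S m).2.1 (BM F S m).2.2.1 (BM F S m).2.2.2 := by
  induction m with
  | zero => exact .zero hA
  | succ m ih => exact ih.step

lemma Invariant.natDegree_le (h : Invariant S m f φ g ψ) :
    f.natDegree ≤ S.denom.natDegree := by
  have hdeg := h.isMonicAtInf.intDegree_le
  have hdenom := natDegree_denom_padeResidual_le S g ψ
  rw [RatFunc.intDegree] at hdeg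
  lia

end Invariant

section Syndrome

variable {n : ℕ} (α e : Fin n → F)

lemma errLoc_ne_zero : errLoc F α e ≠ 0 :=
  (monic_prod_of_monic _ _ fun j _ => monic_X_sub_C (α j)).ne_zero

lemma natDegree_errLoc :
    (errLoc F α e).natDegree = (Finset.univ.filter (fun j => e j ≠ 0)).card := by
  simp [errLoc, natDegree_prod_of_monic _ _ fun j _ => monic_X_sub_C (α j)]

lemma natDegree_denom_synd_le :
    (synd F α e).denom.natDegree ≤ (Finset.univ.filter (fun j => e j ≠ 0)).card := by
  have hdvd : (synd F α e).denom ∣ errLoc F α e :=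
    (RatFunc.denom_dvd (errLoc_ne_zero α e)).2 ⟨errEval F α e, rfl⟩
  exact (natDegree_le_of_dvd hdvd (errLoc_ne_zero α e)).trans_eq (natDegree_errLoc α e)

end Syndrome

end BerlekampMassey

open BerlekampMassey in
theorem berlekamp_massey_degree_le_weight_general {F : Type*} [Field F] (S : RatFunc F) (m : ℕ) :
    (BM F S m).1.natDegree ≤ S.denom.natDegree := by
  obtain ⟨A, hA⟩ := exists_degreeLT_zero_sub S
  calc (BM F S m).1.natDegree
      ≤ (S - algebraMap F[X] (RatFunc F) A).denom.natDegree := (invariant_BM m hA).natDegree_le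
    _ ≤ S.denom.natDegree := by simpa [padeResidual] using natDegree_denom_padeResidual_le S 1 A

open scoped Classical in
/-- For all `m`, the degree of the polynomial `f^(m)` produced by the
Berlekamp--Massey algorithm is at most `t`, the weight of the error vector. -/
theorem berlekamp_massey_degree_le_weight {F : Type*} [Field F] [Fintype F] {n : ℕ}
    (α : Fin n → F) (hα : Function.Injective α) (e : Fin n → F)
    (t : ℕ) (ht : t = (Finset.univ.filter (fun j => e j ≠ 0)).card)
    (S : RatFunc F) (hS : S = synd F α e) (m : ℕ) :
    (BM F S m).1.natDegree ≤ t := by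
  subst hS ht
  exact (berlekamp_massey_degree_le_weight_general _ m).trans
    (BerlekampMassey.natDegree_denom_synd_le α e)
end

section
/- For every m ≥ 0, the Berlekamp–Massey data satisfies the determinant identity f^(m)ψ^(m) − g^(m)φ^(m) = −1. -/
open Polynomial
open scoped Classical

/-- The matrix `(f, φ; g, ψ)` of a Berlekamp--Massey state `(f, φ, g, ψ)`. -/
def BMmatrix {R : Type*} (st : R × R × R × R) : Matrix (Fin 2) (Fin 2) R :=
  !![st.1, st.2.1; st.2.2.1, st.2.2.2]

theorem det_BMmatrix {R : Type*} [CommRing R] (st : R × R × R × R) :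
    (BMmatrix st).det = st.1 * st.2.2.2 - st.2.2.1 * st.2.1 := by
  rw [BMmatrix, Matrix.det_fin_two_of, mul_comm st.2.1]

section Transition

variable {F : Type*} [Field F]

/-- The transition matrix `U^(m)` of the Berlekamp--Massey algorithm for `f = f^(m)`, by which a
step multiplies the state matrix on the left. The exponent `p.toNat` truncates `p` only when
`μ = 0`, where the monomial vanishes anyway. -/
noncomputable def BMtransition (S : RatFunc F) (m : ℕ) (f : F[X]) : Matrix (Fin 2) (Fin 2) F[X] :=
  let μ : F := coeffAtInf (algebraMap F[X] (RatFunc F) f * S) ((f.natDegree : ℤ) - m - 1)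
  let p : ℤ := 2 * f.natDegree - m - 1
  if μ = 0 ∨ 0 ≤ p then
    !![1, -(C μ * X ^ p.toNat); 0, 1]
  else
    !![X ^ (-p).toNat, -C μ; C μ⁻¹, 0]

theorem det_BMtransition (S : RatFunc F) (m : ℕ) (f : F[X]) : (BMtransition S m f).det = 1 := by
  unfold BMtransition
  extract_lets μ p
  split_ifs with h
  · simp only [Matrix.det_fin_two_of, mul_one, mul_zero, sub_zero]
  · have hμ : μ ≠ 0 := fun hμ => h (Or.inl hμ)
    calc Matrix.det !![X ^ (-p).toNat, -C μ; C μ⁻¹, 0]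
        = C (μ * μ⁻¹) := by
          simp only [Matrix.det_fin_two_of, mul_zero, zero_sub, neg_mul, neg_neg, C_mul]
      _ = 1 := by rw [mul_inv_cancel₀ hμ, C_1]

theorem BMmatrix_BMstep (S : RatFunc F) (m : ℕ) (st : F[X] × F[X] × F[X] × F[X]) :
    BMmatrix (BMstep F S m st) = BMtransition S m st.1 * BMmatrix st := by
  obtain ⟨f, φ, g, ψ⟩ := st
  simp only [BMstep, BMtransition, BMmatrix]
  split_ifs <;> simp [sub_eq_add_neg]

theorem det_BMmatrix_BM (S : RatFunc F) (m : ℕ) : (BMmatrix (BM F S m)).det = -1 := by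
  induction m with
  | zero => simp [det_BMmatrix, BM]
  | succ m ih => rw [BM, BMmatrix_BMstep, Matrix.det_mul, det_BMtransition, one_mul, ih]

end Transition

theorem berlekamp_massey_det_general {F : Type*} [Field F] (S : RatFunc F) (m : ℕ) :
    (BM F S m).1 * (BM F S m).2.2.2 - (BM F S m).2.2.1 * (BM F S m).2.1 = -1 := by
  rw [← det_BMmatrix, det_BMmatrix_BM]

/-- The determinant identity for the Berlekamp--Massey data:
`f^(m)ψ^(m) - g^(m)φ^(m) = -1` for every `m ≥ 0`. -/
theorem berlekamp_massey_det {F : Type*} [Field F] [Fintype F] {n : ℕ}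
    (α : Fin n → F) (hα : Function.Injective α) (e : Fin n → F)
    (S : RatFunc F) (hS : S = synd F α e) (m : ℕ) :
    (BM F S m).1 * (BM F S m).2.2.2 - (BM F S m).2.2.1 * (BM F S m).2.1 = -1 :=
  berlekamp_massey_det_general S m
end
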